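/- Let P be a property (a set of complete theories of Σ) and suppose the set of isolated points of P is finite with exactly n ≥ 1 elements. Then for every positive integer k, there exists a Σ-sentence φ such that P_φ is finite with |P_φ| = k if and only if 1 ≤ k ≤ n. That is, the finite part of the pt-spectrum of P equals {1, 2, …, n}. -/

import Mathlib

open FirstOrder Language

/-!
Distinct complete theories are separated by a sentence, so a complete theory is separated from
finitely many others by a conjunction. Hence if `P_φ` is finite, each of its elements is isolated by
`φ` together with such a conjunction. Conversely, a disjunction of isolating sentences defines any
prescribed finite set of isolated points. The finite sets of the form `P_φ` are therefore exactly
the finite sets of isolated points.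
-/

section MaximalTheory

variable {L : FirstOrder.Language} {T T' : L.Theory} {ι : Type*} [Finite ι]

theorem mem_iff_realize_of_isMaximal (hT : T.IsMaximal) (M : Type*) [L.Structure M] [M ⊨ T]
    [Nonempty M] (φ : L.Sentence) : φ ∈ T ↔ M ⊨ φ :=
  (hT.mem_iff_models φ).trans (hT.isComplete.realize_sentence_iff φ M).symm

theorem inf_mem_iff_of_isMaximal (hT : T.IsMaximal) (φ ψ : L.Sentence) :
    φ ⊓ ψ ∈ T ↔ φ ∈ T ∧ ψ ∈ T := by
  obtain ⟨M⟩ := hT.1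
  simp only [mem_iff_realize_of_isMaximal hT M, Sentence.realize_inf]

theorem iInf_mem_iff_of_isMaximal (hT : T.IsMaximal) (φ : ι → L.Sentence) :
    Formula.iInf φ ∈ T ↔ ∀ i, φ i ∈ T := by
  obtain ⟨M⟩ := hT.1
  simp only [mem_iff_realize_of_isMaximal hT M, Sentence.Realize, Formula.realize_iInf]

theorem iSup_mem_iff_of_isMaximal (hT : T.IsMaximal) (φ : ι → L.Sentence) :
    Formula.iSup φ ∈ T ↔ ∃ i, φ i ∈ T := by
  obtain ⟨M⟩ := hT.1
  simp only [mem_iff_realize_of_isMaximal hT M, Sentence.Realize, Formula.realize_iSup]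

theorem eq_of_isMaximal_of_subset (hT : T.IsMaximal) (hT' : T'.IsSatisfiable) (h : T ⊆ T') :
    T = T' := by
  refine h.antisymm fun φ hφ ↦ (hT.mem_or_not_mem φ).resolve_right fun hnot ↦ ?_
  obtain ⟨M⟩ := hT'
  exact (Sentence.realize_not M).1 (T'.realize_sentence_of_mem (h hnot))
    (T'.realize_sentence_of_mem hφ)

theorem exists_mem_forall_notMem_of_isMaximal {S : Set L.Theory} (hT : T.IsMaximal)
    (hS : S.Finite) (hSmax : ∀ T' ∈ S, T'.IsMaximal) (hTS : T ∉ S) :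
    ∃ ψ ∈ T, ∀ T' ∈ S, ψ ∉ T' := by
  have separate (T' : S) : ∃ ψ ∈ T, ψ ∉ T'.1 := Set.not_subset.1 fun h ↦
    hTS (eq_of_isMaximal_of_subset hT (hSmax T' T'.2).1 h ▸ T'.2)
  choose ψ hψT hψS using separate
  have := hS.to_subtype
  refine ⟨Formula.iInf ψ, (iInf_mem_iff_of_isMaximal hT ψ).2 hψT, fun T' hT' hmem ↦ ?_⟩
  exact hψS ⟨T', hT'⟩ ((iInf_mem_iff_of_isMaximal (hSmax T' hT') ψ).1 hmem ⟨T', hT'⟩)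

end MaximalTheory

section Property

variable {L : FirstOrder.Language}

/-- The set `P_φ` of theories in the property `P` that contain the sentence `φ`. -/
def theoriesContaining (P : Set L.Theory) (φ : L.Sentence) : Set L.Theory :=
  {T ∈ P | φ ∈ T}

/-- The isolated points of the property `P`: the theories `T ∈ P` with `P_φ = {T}` for some
sentence `φ`. -/
def isolatedPoints (P : Set L.Theory) : Set L.Theory :=
  {T ∈ P | ∃ φ : L.Sentence, theoriesContaining P φ = {T}}

variable {P : Set L.Theory}

theorem theoriesContaining_inf (hP : ∀ T ∈ P, T.IsMaximal) (φ ψ : L.Sentence) :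
    theoriesContaining P (φ ⊓ ψ) = theoriesContaining P φ ∩ theoriesContaining P ψ := by
  ext T
  have mem_inf (hT : T ∈ P) := inf_mem_iff_of_isMaximal (hP T hT) φ ψ
  simp only [theoriesContaining, Set.mem_inter_iff, Set.mem_ofPred_eq]
  tauto

theorem theoriesContaining_iSup {ι : Type*} [Finite ι] (hP : ∀ T ∈ P, T.IsMaximal)
    (φ : ι → L.Sentence) :
    theoriesContaining P (Formula.iSup φ) = ⋃ i, theoriesContaining P (φ i) := by
  ext T
  simp only [theoriesContaining, Set.mem_iUnion, Set.mem_ofPred_eq, exists_and_left]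
  exact and_congr_right fun hT ↦ iSup_mem_iff_of_isMaximal (hP T hT) φ

theorem theoriesContaining_subset_isolatedPoints (hP : ∀ T ∈ P, T.IsMaximal) {φ : L.Sentence}
    (hfin : (theoriesContaining P φ).Finite) :
    theoriesContaining P φ ⊆ isolatedPoints P := by
  intro T hT
  obtain ⟨ψ, hψT, hψ⟩ := exists_mem_forall_notMem_of_isMaximal (hP T hT.1)
    (hfin.sdiff (t := {T})) (fun T' hT' ↦ hP T' hT'.1.1) (fun h ↦ h.2 rfl)
  refine ⟨hT.1, φ ⊓ ψ, ?_⟩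
  rw [theoriesContaining_inf hP, Set.eq_singleton_iff_unique_mem]
  refine ⟨⟨hT, hT.1, hψT⟩, fun T' hT' ↦ ?_⟩
  by_contra hne
  exact hψ T' ⟨hT'.1, hne⟩ hT'.2.2

theorem exists_theoriesContaining_eq (hP : ∀ T ∈ P, T.IsMaximal) {S : Set L.Theory}
    (hfin : S.Finite) (hS : S ⊆ isolatedPoints P) :
    ∃ φ : L.Sentence, theoriesContaining P φ = S := by
  choose φ hφ using fun T : S ↦ (hS T.2).2
  have := hfin.to_subtype
  refine ⟨Formula.iSup φ, ?_⟩
  simp only [theoriesContaining_iSup hP, hφ, Set.iUnion_of_singleton_coe]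

end Property

theorem encard_eq_natCast_iff {α : Type*} {s : Set α} {k : ℕ} :
    s.encard = k ↔ s.Finite ∧ s.ncard = k where
  mp h := ⟨Set.finite_of_encard_eq_coe h, by simp [Set.ncard, h]⟩
  mpr h := by rw [← h.1.cast_ncard_eq, h.2]

theorem ptSpectrum_finite_part_of_isolated_general {L : FirstOrder.Language} (P : Set L.Theory)
    (hP : ∀ T ∈ P, T.IsMaximal) (k : ℕ) :
    (∃ φ : L.Sentence, (theoriesContaining P φ).encard = k) ↔ k ≤ (isolatedPoints P).encard := by
  constructor
  · rintro ⟨φ, hφ⟩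
    rw [← hφ]
    exact Set.encard_le_encard
      (theoriesContaining_subset_isolatedPoints hP (Set.finite_of_encard_eq_coe hφ))
  · intro hk
    obtain ⟨S, hS, hSk⟩ := Set.exists_subset_encard_eq hk
    obtain ⟨φ, hφ⟩ := exists_theoriesContaining_eq hP (Set.finite_of_encard_eq_coe hSk) hS
    exact ⟨φ, hφ ▸ hSk⟩

/-- If a property `P` has exactly `n ≥ 1` isolated points (theories `T ∈ P` isolated by a
sentence φ with `P_φ = {T}`), then for each positive integer `k` there is a sentence φ with
`P_φ` finite of cardinality `k` iff `1 ≤ k ≤ n`; i.e. the finite part of the pt-spectrum of `P`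
is `{1, …, n}`. -/
theorem ptSpectrum_finite_part_of_isolated {L : FirstOrder.Language} (P : Set L.Theory)
    (hP : ∀ T ∈ P, T.IsMaximal) (n : ℕ) (hn : 1 ≤ n)
    (hisoFin : {T ∈ P | ∃ φ : L.Sentence, {T' ∈ P | φ ∈ T'} = {T}}.Finite)
    (hisoCard : {T ∈ P | ∃ φ : L.Sentence, {T' ∈ P | φ ∈ T'} = {T}}.ncard = n) :
    ∀ k : ℕ, 1 ≤ k →
      ((∃ φ : L.Sentence, {T ∈ P | φ ∈ T}.Finite ∧ {T ∈ P | φ ∈ T}.ncard = k) ↔ k ≤ n) := by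
  intro k _
  simpa only [encard_eq_natCast_iff, isolatedPoints, theoriesContaining, ← hisoFin.cast_ncard_eq,
    hisoCard, Nat.cast_le] using ptSpectrum_finite_part_of_isolated_general P hP k
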